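/- arXiv:2301.07201 — 2 statements merged into one kernel-verified Lean document; each statement's English description precedes it below -/
import Mathlib

section
/- Let k ≥ 1 be a natural number, g : (-∞,0] → [0,∞) continuous, f : (-∞,0] → [0,∞) continuous, and let h : (-∞,0] → ℝ be continuous with h(A_g(t)) = e^{k·G(t)}·f(t) for all t ≤ 0. Suppose there exist θ ∈ (0,1) and M > 0 such that for every z < -M, (k+1)·∫_z^0 e^{(k+1)·G(s)}·f(s)ds ≤ (1-θ)·e^{k·G(z)}·f(z)·∫_z^0 e^{G(s)}ds. Then for every z < A_g(-M), ∫_z^0 h(s)ds ≤ ((1-θ)/(k+1))·|z|·h(z). -/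
open Set Real

/-!
The claim is the change of variables `s = A t`. Since `A' = exp ∘ G`, for `z = A t`,
`∫_z^0 h = ∫_t^0 h (A s) exp (G s) ds = ∫_t^0 exp ((k + 1) G s) f s ds`,
while `|z| = ∫_t^0 exp (G s) ds` and `h z = exp (k G t) f t`, so the claim at `z` is the hypothesis
at `t` divided by `k + 1`. That each `z < A (-M)` is `A t` for some `t < -M` follows from the
intermediate value theorem, because `exp ∘ G ≥ 1` gives `A z ≤ z`.

As `g` is controlled only on `(-∞, 0]`, the argument runs with the continuous extension
`t ↦ g (min t 0)`, so that every primitive is differentiable on all of `ℝ`.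
-/

/-- Ambrosetti–Rabinowitz transfer, Lemma 4.2 of the paper. If the pair
`(f,g)` satisfies `(H_AR)`, then the transformed nonlinearity `h` satisfies the
Ambrosetti–Rabinowitz condition `∫_z^0 h ≤ ((1-θ)/(k+1)) |z| h(z)` for `z < A_g(-M)`. -/
theorem transformed_AR_condition
    (k : ℕ) (hk : 1 ≤ k)
    (g : ℝ → ℝ) (hg_cont : ContinuousOn g (Iic 0)) (hg_nonneg : ∀ s ≤ (0 : ℝ), 0 ≤ g s)
    (f : ℝ → ℝ) (hf_cont : ContinuousOn f (Iic 0)) (hf_nonneg : ∀ t ≤ (0 : ℝ), 0 ≤ f t)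
    (G : ℝ → ℝ) (hG : ∀ t : ℝ, G t = ∫ τ in t..0, g τ)
    (A : ℝ → ℝ) (hA : ∀ s : ℝ, A s = -∫ t in s..0, Real.exp (G t))
    (h : ℝ → ℝ) (hh_cont : ContinuousOn h (Iic 0))
    (hh : ∀ t ≤ (0 : ℝ), h (A t) = Real.exp ((k : ℝ) * G t) * f t)
    (θ M : ℝ) (hθ : θ ∈ Ioo (0 : ℝ) 1) (hM : 0 < M)
    (hAR : ∀ z < -M,
      ((k : ℝ) + 1) * ∫ s in z..0, Real.exp (((k : ℝ) + 1) * G s) * f s ≤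
        (1 - θ) * (Real.exp ((k : ℝ) * G z) * f z) * ∫ s in z..0, Real.exp (G s)) :
    ∀ z < A (-M),
      (∫ s in z..0, h s) ≤ (1 - θ) / ((k : ℝ) + 1) * |z| * h z := by
  -- Replace `g` by its extension `g ∘ min · 0`; on `(-∞, 0]` this changes neither `G` nor `A`.
  have hgc : Continuous fun t => g (min t 0) :=
    hg_cont.comp_continuous (continuous_id.min continuous_const) fun t => min_le_right t 0
  set G' : ℝ → ℝ := fun t => ∫ τ in t..0, g (min τ 0) with hG'
  have hGG : ∀ t ≤ (0 : ℝ), G t = G' t := by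
    intro t ht
    rw [hG, hG']
    refine intervalIntegral.integral_congr fun τ hτ => ?_
    rw [uIcc_of_le ht] at hτ
    simp only [min_eq_left hτ.2]
  have hG'c : Continuous G' := by
    have : G' = fun t => -∫ τ in (0 : ℝ)..t, g (min τ 0) := by
      funext t
      exact intervalIntegral.integral_symm _ _
    rw [this]
    exact (intervalIntegral.continuous_primitive
      (fun a b => hgc.intervalIntegrable a b) 0).neg
  have hEc : Continuous fun t => Real.exp (G' t) := Real.continuous_exp.comp hG'c
  set A' : ℝ → ℝ := fun s => ∫ t in (0 : ℝ)..s, Real.exp (G' t) with hA'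
  have hIG : ∀ s ≤ (0 : ℝ), ∫ t in s..0, Real.exp (G t) = ∫ t in s..0, Real.exp (G' t) := by
    intro s hs
    refine intervalIntegral.integral_congr fun t ht => ?_
    rw [uIcc_of_le hs] at ht
    simp only [hGG t ht.2]
  have hAA : ∀ s ≤ (0 : ℝ), A s = A' s := by
    intro s hs
    rw [hA, hIG s hs, hA', ← intervalIntegral.integral_symm]
  have hA'd : ∀ x, HasDerivAt A' (Real.exp (G' x)) x := fun x =>
    hEc.integral_hasStrictDerivAt 0 x |>.hasDerivAt
  have hA'c : Continuous A' := continuous_iff_continuousAt.2 fun x => (hA'd x).continuousAt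
  have hG'nn : ∀ t ≤ (0 : ℝ), 0 ≤ G' t := fun t ht =>
    intervalIntegral.integral_nonneg ht fun u _ => hg_nonneg _ (min_le_right u 0)
  have hA'le : ∀ s ≤ (0 : ℝ), A' s ≤ s := by
    intro s hs
    have h1 : ∫ _ in s..0, (1 : ℝ) ≤ ∫ t in s..0, Real.exp (G' t) :=
      intervalIntegral.integral_mono_on hs (by simp) (hEc.intervalIntegrable _ _)
        fun t ht => Real.one_le_exp (hG'nn t ht.2)
    have h2 : A' s = -∫ t in s..0, Real.exp (G' t) := intervalIntegral.integral_symm _ _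
    simp only [intervalIntegral.integral_const, smul_eq_mul, mul_one] at h1
    linarith
  intro z hz
  have hM0 : -M ≤ 0 := by linarith
  have hzM : z ≤ -M := by
    have := hA'le _ hM0
    rw [hAA _ hM0] at hz
    linarith
  obtain ⟨t, ht, htz⟩ : z ∈ A' '' Icc z (-M) :=
    intermediate_value_Icc hzM hA'c.continuousOn
      ⟨hA'le z (hzM.trans hM0), (hAA _ hM0 ▸ hz).le⟩
  have htM : t < -M := by
    refine lt_of_le_of_ne ht.2 fun h0 => ?_
    rw [hAA _ hM0, ← h0, htz] at hz
    exact lt_irrefl _ hz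
  have ht0 : t ≤ 0 := by linarith
  have hsub : ∫ s in z..0, h s = ∫ s in t..0, Real.exp (((k : ℝ) + 1) * G s) * f s := by
    have hA0 : A' 0 = 0 := by simp [hA']
    have himg : A' '' uIcc t 0 ⊆ Iic 0 := by
      rintro _ ⟨x, hx, rfl⟩
      rw [uIcc_of_le ht0] at hx
      exact (hA'le x hx.2).trans hx.2
    have key := intervalIntegral.integral_comp_mul_deriv' (a := t) (b := 0)
      (fun x _ => hA'd x) hEc.continuousOn (hh_cont.mono himg)
    rw [htz, hA0] at key
    rw [← key]
    refine intervalIntegral.integral_congr fun s hs => ?_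
    rw [uIcc_of_le ht0] at hs
    simp only [Function.comp]
    rw [← hAA s hs.2, hh s hs.2, ← hGG s hs.2, add_mul, one_mul, Real.exp_add]
    ring
  have hzabs : |z| = ∫ s in t..0, Real.exp (G s) := by
    rw [abs_of_nonpos (hzM.trans hM0), ← htz, hIG t ht0]
    exact (intervalIntegral.integral_symm _ _).symm
  have hhz : h z = Real.exp ((k : ℝ) * G t) * f t := by
    rw [← hh t ht0, hAA t ht0, htz]
  have hk1 : (0 : ℝ) < (k : ℝ) + 1 := by positivity
  have hfin := hAR t htM
  rw [← hsub, ← hzabs, ← hhz] at hfin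
  rw [div_mul_eq_mul_div, div_mul_eq_mul_div, le_div_iff₀ hk1]
  linarith
end

section
/- Let k ≥ 1 be a natural number, g : (-∞,0] → [0,∞) continuous, and f : (-∞,0] → [0,∞) continuous. Then limsup_{t→0⁻} (k+1)·(∫_t^0 e^{(k+1)·G(s)}·f(s)ds)/(∫_t^0 e^{G(s)}ds)^{k+1} ≤ limsup_{t→0⁻} e^{k·G(t)}·f(t)/(∫_t^0 e^{G(s)}ds)^k, where limits superior are taken over t < 0 as t → 0. -/
/-! If `e^{kG} f ≤ z A^k` on `(t, 0)`, where `A s = ∫_s^0 e^G`, then multiplying by `e^G = -A'` gives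
`(k+1) e^{(k+1)G} f ≤ z (k+1) A^k e^G = -z (A^{k+1})'`, and integrating over `(t, 0)` yields
`(k+1) ∫_t^0 e^{(k+1)G} f ≤ z A(t)^{k+1}`. Every real `z` above the right-hand limsup satisfies the
assumption for `t` near `0`, hence bounds the left-hand limsup. The functions are only controlled
on `(-∞, 0]`, so they are first replaced by globally continuous ones that agree there. -/

open Set Real Filter

theorem continuous_comp_min_zero {g : ℝ → ℝ} (hg : ContinuousOn g (Iic 0)) :
    Continuous fun x => g (min x 0) :=
  hg.comp_continuous (continuous_id.min continuous_const) fun x => min_le_right x 0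

theorem integral_congr_nonpos {u v : ℝ → ℝ} (h : ∀ s ≤ (0 : ℝ), u s = v s) {t : ℝ} (ht : t ≤ 0) :
    ∫ s in t..0, u s = ∫ s in t..0, v s := by
  apply intervalIntegral.integral_congr
  intro s hs
  rw [uIcc_of_le ht] at hs
  exact h s hs.2

theorem hasDerivAt_integral_left {E : ℝ → ℝ} (hE : Continuous E) (s : ℝ) :
    HasDerivAt (fun t => ∫ x in t..0, E x) (-E s) s :=
  intervalIntegral.integral_hasDerivAt_left (hE.intervalIntegrable _ _)
    (hE.stronglyMeasurableAtFilter _ _) hE.continuousAt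

/-- The integrated comparison: `-(∫_s^0 E)^{k+1}` is a primitive of
`(k+1) E(s) (∫_s^0 E)^k`. -/
theorem integral_le_of_le_mul_pow {E h : ℝ → ℝ} (hE : Continuous E) (hh : Continuous h)
    (k : ℕ) {z t : ℝ} (ht : t ≤ 0)
    (hle : ∀ s ∈ Ioo t 0, h s ≤ z * (E s * (∫ x in s..0, E x) ^ k)) :
    ((k : ℝ) + 1) * ∫ s in t..0, h s ≤ z * (∫ s in t..0, E s) ^ (k + 1) := by
  have hA : Continuous fun s => ∫ x in s..0, E x :=
    continuous_iff_continuousAt.2 fun s => (hasDerivAt_integral_left hE s).continuousAt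
  have hc : Continuous fun s => z * (E s * (∫ x in s..0, E x) ^ k) :=
    continuous_const.mul (hE.mul (hA.pow k))
  have h1 : ∫ s in t..0, h s ≤ ∫ s in t..0, z * (E s * (∫ x in s..0, E x) ^ k) :=
    intervalIntegral.integral_mono_on_of_le_Ioo ht (hh.intervalIntegrable _ _)
      (hc.intervalIntegrable _ _) hle
  have h2 : ∫ s in t..0, -((k : ℝ) + 1) * (z * (E s * (∫ x in s..0, E x) ^ k)) =
      z * (∫ x in (0 : ℝ)..0, E x) ^ (k + 1) - z * (∫ x in t..0, E x) ^ (k + 1) := by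
    refine intervalIntegral.integral_eq_sub_of_hasDerivAt
      (f := fun s => z * (∫ x in s..0, E x) ^ (k + 1)) (fun s _ => ?_)
      ((continuous_const.mul hc).intervalIntegrable _ _)
    refine (((hasDerivAt_integral_left hE s).pow (k + 1)).const_mul z).congr_deriv ?_
    push_cast
    ring
  rw [intervalIntegral.integral_const_mul, intervalIntegral.integral_same,
    zero_pow (Nat.succ_ne_zero k)] at h2
  have hk : (0 : ℝ) ≤ (k : ℝ) + 1 := by positivity
  linarith [mul_le_mul_of_nonneg_left h1 hk]

/-- part (b) of Lemma 6.3 of the paper, in substituted form. A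
one-sided L'Hôpital-type inequality:
`limsup_{t→0⁻} (k+1) (∫_t^0 e^{(k+1)G} f) / (∫_t^0 e^{G})^{k+1}
  ≤ limsup_{t→0⁻} e^{kG(t)} f(t) / (∫_t^0 e^{G})^k`, with values in `EReal`. -/
theorem transformed_limsup_at_zero
    (k : ℕ) (hk : 1 ≤ k)
    (g : ℝ → ℝ) (hg_cont : ContinuousOn g (Iic 0)) (hg_nonneg : ∀ s ≤ (0 : ℝ), 0 ≤ g s)
    (f : ℝ → ℝ) (hf_cont : ContinuousOn f (Iic 0)) (hf_nonneg : ∀ t ≤ (0 : ℝ), 0 ≤ f t)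
    (G : ℝ → ℝ) (hG : ∀ t : ℝ, G t = ∫ τ in t..0, g τ) :
    Filter.limsup
        (fun t => ((((k : ℝ) + 1) * (∫ s in t..0, Real.exp (((k : ℝ) + 1) * G s) * f s) /
          (∫ s in t..0, Real.exp (G s)) ^ (k + 1) : ℝ) : EReal))
        (nhdsWithin 0 (Iio 0)) ≤
      Filter.limsup
        (fun t => ((Real.exp ((k : ℝ) * G t) * f t /
          (∫ s in t..0, Real.exp (G s)) ^ k : ℝ) : EReal))
        (nhdsWithin 0 (Iio 0)) := by
  have hg' := continuous_comp_min_zero hg_cont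
  have hf' := continuous_comp_min_zero hf_cont
  set f₀ : ℝ → ℝ := fun x => f (min x 0) with hf₀
  set G₀ : ℝ → ℝ := fun t => ∫ x in t..0, g (min x 0) with hG₀
  have hGc : Continuous G₀ :=
    continuous_iff_continuousAt.2 fun s => (hasDerivAt_integral_left hg' s).continuousAt
  have hff : ∀ t ≤ (0 : ℝ), f t = f₀ t := fun t ht => by simp [hf₀, min_eq_left ht]
  have hGG : ∀ t ≤ (0 : ℝ), G t = G₀ t := fun t ht => by
    rw [hG]
    exact integral_congr_nonpos (fun s hs => by rw [min_eq_left hs]) ht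
  have hEc : Continuous fun s => Real.exp (G₀ s) := Real.continuous_exp.comp hGc
  have hhc : Continuous fun s => Real.exp (((k : ℝ) + 1) * G₀ s) * f₀ s :=
    (Real.continuous_exp.comp (continuous_const.mul hGc)).mul hf'
  have hA : ∀ t ≤ (0 : ℝ), ∫ s in t..0, Real.exp (G s) = ∫ s in t..0, Real.exp (G₀ s) :=
    fun t ht => integral_congr_nonpos (fun s hs => by rw [hGG s hs]) ht
  have hApos : ∀ t < (0 : ℝ), 0 < ∫ s in t..0, Real.exp (G₀ s) := fun t ht =>
    intervalIntegral.intervalIntegral_pos_of_pos (hEc.intervalIntegrable _ _)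
      (fun s => Real.exp_pos _) ht
  refine EReal.le_of_forall_lt_iff_le.1 fun z hz => ?_
  obtain ⟨a, ha, hev⟩ :=
    mem_nhdsLT_iff_exists_Ioo_subset.1 (Filter.eventually_lt_of_limsup_lt hz)
  refine Filter.limsup_le_of_le (h := ?_)
  filter_upwards [Ioo_mem_nhdsLT ha] with t ht
  rw [EReal.coe_le_coe_iff, hA t ht.2.le, div_le_iff₀ (pow_pos (hApos t ht.2) _),
    integral_congr_nonpos (v := fun s => Real.exp (((k : ℝ) + 1) * G₀ s) * f₀ s)
      (fun s hs => by rw [hGG s hs, hff s hs]) ht.2.le]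
  refine integral_le_of_le_mul_pow hEc hhc k ht.2.le fun s hs => ?_
  have hs' := hev ⟨ht.1.trans hs.1, hs.2⟩
  simp only [mem_ofPred_eq, EReal.coe_lt_coe_iff] at hs'
  rw [hA s hs.2.le, hGG s hs.2.le, hff s hs.2.le, div_lt_iff₀ (pow_pos (hApos s hs.2) _)] at hs'
  rw [add_mul, one_mul, Real.exp_add]
  linarith [mul_le_mul_of_nonneg_left hs'.le (Real.exp_pos (G₀ s)).le]
end
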